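/- (The Maxwellian is a scattering frame) Let λ(x,ξ,t) = e^{−|x−tξ|² − |ξ|²}, i.e. λ₀(x,ξ) = e^{−|x|²−|ξ|²}. Then: (i) sup_{x,ξ} λ₀(x,ξ)⁻¹ ∫₀^∞ Q⁺(λ,λ)(x+tξ,ξ,t) dt + sup_{x,ξ} λ₀(x,ξ)⁻¹ ∫₀^∞ Q⁻(λ,λ)(x+tξ,ξ,t) dt ≤ 2·V_{n−1}·Ω < ∞; (ii) for every bounded D ⊆ ℝⁿ, sup_{x∈D,ξ} λ₀(x,ξ)⁻¹ ∫_z^∞ Q⁺(λ,λ)(x+tξ,ξ,t) dt + sup_{x∈D,ξ} λ₀(x,ξ)⁻¹ ∫_z^∞ Q⁻(λ,λ)(x+tξ,ξ,t) dt ≤ 2·V_{n−1}·Ω_D(z) → 0 as z → ∞; hence λ is a scattering frame and its isotropic radius α satisfies α ≥ 1/(4·V_{n−1}·Ω). Here V_{n−1} denotes the total surface measure of the unit sphere S^{n−1} ⊆ ℝⁿ. -/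

import Mathlib

/-!
The collision map `(ξ, ξ⋆) ↦ (ξ', ξ'⋆)` conserves momentum and energy, hence also
`|X - tξ|² + |X - tξ⋆|² + |ξ|² + |ξ⋆|²`. A product of two values of the Maxwellian `λ` at the same
space-time point is therefore unchanged by a collision, so that `Q⁺(λ,λ) = Q⁻(λ,λ)`
(`Qp_eq_Qm`). Along a characteristic `λ(x+tξ,ξ,t) = λ₀(x,ξ)` factors out of `Q⁻`, and
`|𝐧·(ξ-ξ⋆)| ≤ |ξ-ξ⋆|` leaves `V_{n-1}` times the integrand of `Ω` (`ofReal_Qm_le`).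

To bound `Ω`, integrate in `s` first: for fixed `v = ξ - ξ⋆`, the map `s ↦ x + sv` moves with speed
`|v|` along a line, so `∫ e^{-|x+sv|²}|v| ds` is at most the one-dimensional Gaussian integral,
uniformly in `x` and `v` (`line_bound`). What remains is a Gaussian integral in `ξ⋆`.

For the tail over `s > z` with `|x| ≤ R`, split the `ξ⋆`-integral at `|ξ - ξ⋆| = 1/√z`. The near
part is bounded by the volume of a ball of radius `1/√z`. In the far part
`|x + sv| ≥ √z - R`, so half of the Gaussian exponent yields the factor `e^{-(√z-R)²/2}` while the
other half is still integrable along the line (`line_tail_bound`). Both parts vanish as `z → ∞`,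
uniformly in `ξ`.
-/

open MeasureTheory Real Filter Set
open scoped RealInnerProductSpace ENNReal

noncomputable section

/-- Post-collisional velocity `ξ' = ξ − (n·(ξ−ξ⋆))n` for hard spheres. -/
def postA {n : ℕ} (ξ ξs nv : EuclideanSpace ℝ (Fin n)) : EuclideanSpace ℝ (Fin n) :=
  ξ - ⟪nv, ξ - ξs⟫ • nv

/-- Post-collisional velocity `ξ'⋆ = ξ⋆ + (n·(ξ−ξ⋆))n` for hard spheres. -/
def postB {n : ℕ} (ξ ξs nv : EuclideanSpace ℝ (Fin n)) : EuclideanSpace ℝ (Fin n) :=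
  ξs + ⟪nv, ξ - ξs⟫ • nv

/-- The gain term `Q⁺(F,G)` of the hard-sphere Boltzmann collision operator, with `dn`
the surface measure on the unit sphere `S^{n−1}`. -/
def Qp {n : ℕ} (F G : EuclideanSpace ℝ (Fin n) → EuclideanSpace ℝ (Fin n) → ℝ → ℝ)
    (x ξ : EuclideanSpace ℝ (Fin n)) (t : ℝ) : ℝ :=
  (1/2) * ∫ p : EuclideanSpace ℝ (Fin n) × Metric.sphere (0 : EuclideanSpace ℝ (Fin n)) 1,
    (F x (postA ξ p.1 (p.2 : EuclideanSpace ℝ (Fin n))) t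
        * G x (postB ξ p.1 (p.2 : EuclideanSpace ℝ (Fin n))) t
      + G x (postA ξ p.1 (p.2 : EuclideanSpace ℝ (Fin n))) t
        * F x (postB ξ p.1 (p.2 : EuclideanSpace ℝ (Fin n))) t)
      * |⟪(p.2 : EuclideanSpace ℝ (Fin n)), ξ - p.1⟫|
    ∂((volume : Measure (EuclideanSpace ℝ (Fin n))).prod
        (volume : Measure (EuclideanSpace ℝ (Fin n))).toSphere)

/-- The loss term `Q⁻(F,G)` of the hard-sphere Boltzmann collision operator. -/
def Qm {n : ℕ} (F G : EuclideanSpace ℝ (Fin n) → EuclideanSpace ℝ (Fin n) → ℝ → ℝ)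
    (x ξ : EuclideanSpace ℝ (Fin n)) (t : ℝ) : ℝ :=
  (1/2) * ∫ p : EuclideanSpace ℝ (Fin n) × Metric.sphere (0 : EuclideanSpace ℝ (Fin n)) 1,
    (F x ξ t * G x p.1 t + G x ξ t * F x p.1 t)
      * |⟪(p.2 : EuclideanSpace ℝ (Fin n)), ξ - p.1⟫|
    ∂((volume : Measure (EuclideanSpace ℝ (Fin n))).prod
        (volume : Measure (EuclideanSpace ℝ (Fin n))).toSphere)

/-- `Ω_D(z) = sup_{x∈D, ξ} ∫_z^∞ ∫_{ℝⁿ} e^{−|x+sξ−sξ⋆|²−|ξ⋆|²} |ξ−ξ⋆| dξ⋆ ds`. -/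
def OmegaD {n : ℕ} (D : Set (EuclideanSpace ℝ (Fin n))) (z : ℝ) : ℝ≥0∞ :=
  ⨆ x ∈ D, ⨆ ξ : EuclideanSpace ℝ (Fin n),
    ∫⁻ s in Ioi z, ∫⁻ ξs : EuclideanSpace ℝ (Fin n),
      ENNReal.ofReal (Real.exp (-‖x + s • ξ - s • ξs‖ ^ 2 - ‖ξs‖ ^ 2) * ‖ξ - ξs‖)

/-- `Ω = sup_{x, ξ} ∫_0^∞ ∫_{ℝⁿ} e^{−|x+sξ−sξ⋆|²−|ξ⋆|²} |ξ−ξ⋆| dξ⋆ ds`. -/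
def Omega (n : ℕ) : ℝ≥0∞ :=
  ⨆ (x : EuclideanSpace ℝ (Fin n)) (ξ : EuclideanSpace ℝ (Fin n)),
    ∫⁻ s in Ioi (0:ℝ), ∫⁻ ξs : EuclideanSpace ℝ (Fin n),
      ENNReal.ofReal (Real.exp (-‖x + s • ξ - s • ξs‖ ^ 2 - ‖ξs‖ ^ 2) * ‖ξ - ξs‖)

/-- The total surface measure `V_{n−1}` of the unit sphere `S^{n−1} ⊆ ℝⁿ`. -/
def sphereVol (n : ℕ) : ℝ :=
  (((volume : Measure (EuclideanSpace ℝ (Fin n))).toSphere) univ).toReal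

/-! ### Gain equals loss, and the pointwise bound of the loss term -/

lemma lam_formula {n : ℕ}
    {lam0 : EuclideanSpace ℝ (Fin n) → EuclideanSpace ℝ (Fin n) → ℝ}
    (hlam0 : ∀ x ξ, lam0 x ξ = Real.exp (-‖x‖ ^ 2 - ‖ξ‖ ^ 2))
    {lam : EuclideanSpace ℝ (Fin n) → EuclideanSpace ℝ (Fin n) → ℝ → ℝ}
    (hlam : ∀ x ξ t, lam x ξ t = lam0 (x - t • ξ) ξ)
    (x ξ : EuclideanSpace ℝ (Fin n)) (t : ℝ) :
    lam x ξ t = Real.exp (-‖x - t • ξ‖ ^ 2 - ‖ξ‖ ^ 2) := by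
  rw [hlam, hlam0]

/-- Momentum and energy conservation make the product of two Maxwellians collision invariant. -/
lemma lam_collision {n : ℕ}
    {lam : EuclideanSpace ℝ (Fin n) → EuclideanSpace ℝ (Fin n) → ℝ → ℝ}
    (h : ∀ x ξ t, lam x ξ t = Real.exp (-‖x - t • ξ‖ ^ 2 - ‖ξ‖ ^ 2))
    (x ξ ξs nv : EuclideanSpace ℝ (Fin n)) (hnv : ‖nv‖ = 1) (t : ℝ) :
    lam x (postA ξ ξs nv) t * lam x (postB ξ ξs nv) t = lam x ξ t * lam x ξs t := by
  simp only [h, ← Real.exp_add]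
  congr 1
  have hA : postA ξ ξs nv = ξ - ⟪nv, ξ - ξs⟫ • nv := rfl
  have hB : postB ξ ξs nv = ξs + ⟪nv, ξ - ξs⟫ • nv := rfl
  rw [hA, hB]
  have hd : ⟪nv, ξ - ξs⟫ = ⟪nv, ξ⟫ - ⟪nv, ξs⟫ := inner_sub_right _ _ _
  set d := ⟪nv, ξ - ξs⟫ with hdd
  have hn : ⟪nv, nv⟫ = (1 : ℝ) := by rw [real_inner_self_eq_norm_sq, hnv]; norm_num
  simp only [← real_inner_self_eq_norm_sq, inner_sub_left, inner_sub_right, inner_add_left,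
    inner_add_right, real_inner_smul_left, real_inner_smul_right, hn]
  rw [real_inner_comm nv ξ, real_inner_comm nv ξs, real_inner_comm ξ x, real_inner_comm ξs x,
    real_inner_comm nv x]
  have e1 : ⟪nv, ξ⟫ = d + ⟪nv, ξs⟫ := by linarith
  rw [e1]
  ring

lemma Qp_eq_Qm {n : ℕ}
    {lam : EuclideanSpace ℝ (Fin n) → EuclideanSpace ℝ (Fin n) → ℝ → ℝ}
    (h : ∀ x ξ t, lam x ξ t = Real.exp (-‖x - t • ξ‖ ^ 2 - ‖ξ‖ ^ 2))
    (x ξ : EuclideanSpace ℝ (Fin n)) (t : ℝ) :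
    Qp lam lam x ξ t = Qm lam lam x ξ t := by
  unfold Qp Qm
  congr 1
  refine integral_congr_ae (Eventually.of_forall fun p => ?_)
  have hp : ‖(p.2 : EuclideanSpace ℝ (Fin n))‖ = 1 := by simp
  simp only [lam_collision h x ξ p.1 p.2 hp t]

lemma ofReal_sphereVol (n : ℕ) : ENNReal.ofReal (sphereVol n)
    = ((volume : Measure (EuclideanSpace ℝ (Fin n))).toSphere) univ :=
  ENNReal.ofReal_toReal (measure_ne_top _ _)

lemma ofReal_Qm_le {n : ℕ}
    {lam : EuclideanSpace ℝ (Fin n) → EuclideanSpace ℝ (Fin n) → ℝ → ℝ}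
    (h : ∀ x ξ t, lam x ξ t = Real.exp (-‖x - t • ξ‖ ^ 2 - ‖ξ‖ ^ 2))
    (x ξ : EuclideanSpace ℝ (Fin n)) (t : ℝ) :
    ENNReal.ofReal (Qm lam lam (x + t • ξ) ξ t) ≤
      ENNReal.ofReal (Real.exp (-‖x‖ ^ 2 - ‖ξ‖ ^ 2)) * (ENNReal.ofReal (sphereVol n) *
        ∫⁻ ξs : EuclideanSpace ℝ (Fin n),
          ENNReal.ofReal (Real.exp (-‖x + t • ξ - t • ξs‖ ^ 2 - ‖ξs‖ ^ 2) * ‖ξ - ξs‖)) := by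
  set c : ℝ := Real.exp (-‖x‖ ^ 2 - ‖ξ‖ ^ 2)
  set g : EuclideanSpace ℝ (Fin n) → ℝ := fun ξs =>
    Real.exp (-‖x + t • ξ - t • ξs‖ ^ 2 - ‖ξs‖ ^ 2) with hg
  have hgc : Continuous g := by rw [hg]; fun_prop
  have hQ : Qm lam lam (x + t • ξ) ξ t = c * ∫ p : EuclideanSpace ℝ (Fin n) ×
      Metric.sphere (0 : EuclideanSpace ℝ (Fin n)) 1,
      g p.1 * |⟪(p.2 : EuclideanSpace ℝ (Fin n)), ξ - p.1⟫|
      ∂((volume : Measure (EuclideanSpace ℝ (Fin n))).prod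
        (volume : Measure (EuclideanSpace ℝ (Fin n))).toSphere) := by
    unfold Qm
    rw [← integral_const_mul, ← integral_const_mul]
    refine integral_congr_ae (Eventually.of_forall fun p => ?_)
    simp only [h, add_sub_cancel_right, hg, c]
    ring
  rw [hQ, ENNReal.ofReal_mul (Real.exp_nonneg _)]
  gcongr
  rw [integral_eq_lintegral_of_nonneg_ae
    (Eventually.of_forall fun p => mul_nonneg (Real.exp_nonneg _) (abs_nonneg _))
    (Continuous.aestronglyMeasurable (by fun_prop))]
  refine ENNReal.ofReal_toReal_le.trans ?_
  calc _ ≤ ∫⁻ p : EuclideanSpace ℝ (Fin n) ×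
      Metric.sphere (0 : EuclideanSpace ℝ (Fin n)) 1, ENNReal.ofReal (g p.1 * ‖ξ - p.1‖)
      ∂((volume : Measure (EuclideanSpace ℝ (Fin n))).prod
        (volume : Measure (EuclideanSpace ℝ (Fin n))).toSphere) := by
        refine lintegral_mono fun p => ENNReal.ofReal_le_ofReal ?_
        refine mul_le_mul_of_nonneg_left ?_ (Real.exp_nonneg _)
        refine (abs_real_inner_le_norm _ _).trans ?_
        simp
    _ = _ := by
        rw [lintegral_prod _
          (Continuous.aemeasurable (by exact ENNReal.continuous_ofReal.comp (by fun_prop)))]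
        simp only [lintegral_const]
        rw [lintegral_mul_const _
          (Continuous.measurable (by exact ENNReal.continuous_ofReal.comp (by fun_prop))),
          mul_comm,
          ofReal_sphereVol]

/-- The weighted tail integral of the loss term is at most `V_{n-1}` times the
corresponding integral in the definition of `Ω`. -/
lemma weighted_tail_le {n : ℕ}
    {lam : EuclideanSpace ℝ (Fin n) → EuclideanSpace ℝ (Fin n) → ℝ → ℝ}
    (h : ∀ x ξ t, lam x ξ t = Real.exp (-‖x - t • ξ‖ ^ 2 - ‖ξ‖ ^ 2))
    (x ξ : EuclideanSpace ℝ (Fin n)) (z : ℝ) :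
    (∫⁻ t in Ioi z, ENNReal.ofReal (Qm lam lam (x + t • ξ) ξ t))
        / ENNReal.ofReal (Real.exp (-‖x‖ ^ 2 - ‖ξ‖ ^ 2)) ≤
      ENNReal.ofReal (sphereVol n) *
        ∫⁻ s in Ioi z, ∫⁻ ξs : EuclideanSpace ℝ (Fin n),
          ENNReal.ofReal (Real.exp (-‖x + s • ξ - s • ξs‖ ^ 2 - ‖ξs‖ ^ 2) * ‖ξ - ξs‖) := by
  refine ENNReal.div_le_of_le_mul' ?_
  calc _ ≤ _ := lintegral_mono fun t => ofReal_Qm_le h x ξ t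
    _ = _ := by
      rw [lintegral_const_mul' _ _ ENNReal.ofReal_ne_top,
        lintegral_const_mul' _ _ ENNReal.ofReal_ne_top]

/-! ### Gaussian integrals along lines -/

/-- A Gaussian integrated along the line `s ↦ x + s v` with respect to arc length is dominated by
the centred one-dimensional Gaussian integral: project onto the direction of `v`. -/
lemma line_bound {V : Type*} [NormedAddCommGroup V] [InnerProductSpace ℝ V] (x v : V)
    {b : ℝ} (hb : 0 < b) :
    ∫⁻ s : ℝ, ENNReal.ofReal (Real.exp (-b * ‖x + s • v‖ ^ 2) * ‖v‖) ≤
      ENNReal.ofReal √(π / b) := by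
  rcases eq_or_ne v 0 with rfl | hv
  · simp
  have hv' : 0 < ‖v‖ := norm_pos_iff.mpr hv
  set a := ‖v‖ with ha
  set c : ℝ := ⟪x, v⟫ / a with hc
  have key : ∀ s : ℝ, (a * (s + c / a)) ^ 2 ≤ ‖x + s • v‖ ^ 2 := by
    intro s
    have h1 : |⟪x + s • v, v⟫| ≤ ‖x + s • v‖ * a := abs_real_inner_le_norm _ _
    have h2 : ⟪x + s • v, v⟫ = (a * (s + c / a)) * a := by
      rw [inner_add_left, real_inner_smul_left, real_inner_self_eq_norm_sq, ← ha, hc]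
      field_simp
      ring
    rw [h2, abs_mul, abs_of_pos hv'] at h1
    have h3 := le_of_mul_le_mul_right h1 hv'
    exact sq_le_sq' (by linarith [neg_abs_le (a * (s + c / a))])
      ((le_abs_self _).trans h3)
  have hint : Integrable fun s : ℝ => Real.exp (-b * (a * (s + c / a)) ^ 2) * a :=
    ((((integrable_exp_neg_mul_sq hb).comp_mul_left' hv'.ne').comp_add_right (c / a))).mul_const a
  calc _ ≤ ∫⁻ s : ℝ, ENNReal.ofReal (Real.exp (-b * (a * (s + c / a)) ^ 2) * a) := by
        refine lintegral_mono fun s => ENNReal.ofReal_le_ofReal ?_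
        refine mul_le_mul_of_nonneg_right (Real.exp_le_exp.mpr ?_) hv'.le
        nlinarith [key s]
    _ = ENNReal.ofReal √(π / b) := by
        rw [← ofReal_integral_eq_lintegral_ofReal hint
          (Eventually.of_forall fun s => by positivity), integral_mul_const,
          integral_add_right_eq_self (fun s : ℝ => Real.exp (-b * (a * s) ^ 2)),
          Measure.integral_comp_mul_left (fun s : ℝ => Real.exp (-b * s ^ 2)),
          integral_gaussian, smul_eq_mul, abs_of_pos (by positivity)]
        congr 1
        field_simp

/-- Far from the origin half of the exponent of the Gaussian can be traded for decay. -/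
lemma line_tail_bound {V : Type*} [NormedAddCommGroup V] [InnerProductSpace ℝ V] {x v : V}
    {R z m : ℝ} (hx : ‖x‖ ≤ R) (hz : 0 ≤ z) (hm : 0 ≤ m) (hv : m + R ≤ z * ‖v‖) :
    ∫⁻ s in Ioi z, ENNReal.ofReal (Real.exp (-‖x + s • v‖ ^ 2) * ‖v‖) ≤
      ENNReal.ofReal (Real.exp (-(m ^ 2) / 2)) * ENNReal.ofReal √(π / (1 / 2)) := by
  calc _ ≤ ∫⁻ s in Ioi z, ENNReal.ofReal (Real.exp (-(m ^ 2) / 2)) *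
        ENNReal.ofReal (Real.exp (-(1 / 2) * ‖x + s • v‖ ^ 2) * ‖v‖) := by
        refine setLIntegral_mono' measurableSet_Ioi fun s hs => ?_
        rw [← ENNReal.ofReal_mul (Real.exp_nonneg _), ← mul_assoc, ← Real.exp_add]
        refine ENNReal.ofReal_le_ofReal (mul_le_mul_of_nonneg_right
          (Real.exp_le_exp.mpr ?_) (norm_nonneg _))
        have hs' : z < s := hs
        have h1 : ‖s • v‖ ≤ ‖x + s • v‖ + ‖x‖ := by
          have := norm_sub_le (x + s • v) x
          rwa [add_sub_cancel_left] at this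
        rw [norm_smul, Real.norm_eq_abs, abs_of_nonneg (hz.trans hs'.le)] at h1
        have h2 : z * ‖v‖ ≤ s * ‖v‖ := mul_le_mul_of_nonneg_right hs'.le (norm_nonneg _)
        have h3 : m ≤ ‖x + s • v‖ := by linarith
        nlinarith [pow_le_pow_left₀ hm h3 2]
    _ ≤ _ := by
        rw [lintegral_const_mul' _ _ ENNReal.ofReal_ne_top]
        gcongr
        exact (setLIntegral_le_lintegral _ _).trans (line_bound x v (by norm_num))

lemma lintegral_gaussian_lt_top (n : ℕ) :
    ∫⁻ ξ : EuclideanSpace ℝ (Fin n), ENNReal.ofReal (Real.exp (-‖ξ‖ ^ 2)) < ⊤ := by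
  refine Integrable.lintegral_lt_top ?_
  refine not_imp_comm.1 integral_undef ?_
  have := GaussianFourier.integral_rexp_neg_mul_sq_norm (V := EuclideanSpace ℝ (Fin n)) one_pos
  simp only [neg_one_mul] at this
  rw [this]
  positivity

/-! ### Finiteness of `Ω` and decay of `Ω_D` -/

/-- Integrating in the time variable first. -/
lemma Omega_integral_swap {n : ℕ} (x ξ : EuclideanSpace ℝ (Fin n)) (z : ℝ) :
    (∫⁻ s in Ioi z, ∫⁻ ξs : EuclideanSpace ℝ (Fin n),
      ENNReal.ofReal (Real.exp (-‖x + s • ξ - s • ξs‖ ^ 2 - ‖ξs‖ ^ 2) * ‖ξ - ξs‖)) =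
    ∫⁻ ξs : EuclideanSpace ℝ (Fin n), ENNReal.ofReal (Real.exp (-‖ξs‖ ^ 2)) *
      ∫⁻ s in Ioi z, ENNReal.ofReal (Real.exp (-‖x + s • (ξ - ξs)‖ ^ 2) * ‖ξ - ξs‖) := by
  rw [lintegral_lintegral_swap (Continuous.aemeasurable
    (by unfold Function.uncurry; exact ENNReal.continuous_ofReal.comp (by fun_prop)))]
  refine lintegral_congr fun ξs => ?_
  rw [← lintegral_const_mul' _ _ ENNReal.ofReal_ne_top]
  refine lintegral_congr fun s => ?_
  rw [← ENNReal.ofReal_mul (Real.exp_nonneg _), ← mul_assoc, ← Real.exp_add, smul_sub,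
    add_sub_assoc]
  congr 3
  ring

lemma Omega_lt_top (n : ℕ) : Omega n < ⊤ := by
  refine lt_of_le_of_lt (b := (∫⁻ ξ : EuclideanSpace ℝ (Fin n),
    ENNReal.ofReal (Real.exp (-‖ξ‖ ^ 2))) * ENNReal.ofReal √(π / 1)) ?_
    (ENNReal.mul_lt_top (lintegral_gaussian_lt_top n) ENNReal.ofReal_lt_top)
  refine iSup₂_le fun x ξ => ?_
  rw [Omega_integral_swap, ← lintegral_mul_const' _ _ ENNReal.ofReal_ne_top]
  refine lintegral_mono fun ξs => ?_
  gcongr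
  refine (setLIntegral_le_lintegral _ _).trans ?_
  simpa only [neg_one_mul] using line_bound x (ξ - ξs) one_pos

/-- Splitting the velocities at `|ξ - ξ⋆| = 1/√z`: the near ones contribute the volume of a small
ball, the far ones the exponentially small factor of `line_tail_bound`. -/
lemma OmegaD_le {n : ℕ} {D : Set (EuclideanSpace ℝ (Fin n))} {R : ℝ}
    (hD : ∀ x ∈ D, ‖x‖ ≤ R) {z : ℝ} (hz : 0 < z) (hR : R ≤ √z) :
    OmegaD D z ≤
      (∫⁻ ξ : EuclideanSpace ℝ (Fin n), ENNReal.ofReal (Real.exp (-‖ξ‖ ^ 2))) *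
        (ENNReal.ofReal (Real.exp (-((√z - R) ^ 2) / 2)) * ENNReal.ofReal √(π / (1 / 2)))
      + ENNReal.ofReal √(π / 1) *
        volume (Metric.ball (0 : EuclideanSpace ℝ (Fin n)) (1 / √z)) := by
  refine iSup₂_le fun x hx => iSup_le fun ξ => ?_
  have hB : volume (Metric.ball (0 : EuclideanSpace ℝ (Fin n)) (1 / √z)) =
      volume (Metric.ball ξ (1 / √z)) := (Measure.addHaar_ball_center _ _ _).symm
  have hG : Measurable fun ξs : EuclideanSpace ℝ (Fin n) =>
      ENNReal.ofReal (Real.exp (-‖ξs‖ ^ 2)) :=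
    (ENNReal.continuous_ofReal.comp (by fun_prop)).measurable
  rw [Omega_integral_swap, ← lintegral_mul_const _ hG, hB,
    ← lintegral_indicator_const measurableSet_ball, ← lintegral_add_left
      (hG.mul_const _)]
  refine lintegral_mono fun ξs => ?_
  by_cases hs : ξs ∈ Metric.ball ξ (1 / √z)
  · rw [Set.indicator_of_mem hs]
    refine le_trans ?_ le_add_self
    refine (mul_le_of_le_one_left (zero_le) ?_).trans
      ((setLIntegral_le_lintegral _ _).trans
        (by simpa only [neg_one_mul] using line_bound x (ξ - ξs) one_pos))
    rw [ENNReal.ofReal_le_one, Real.exp_le_one_iff]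
    nlinarith [sq_nonneg ‖ξs‖]
  · refine le_trans ?_ le_self_add
    gcongr
    refine line_tail_bound (hD x hx) hz.le (by linarith) ?_
    rw [Metric.mem_ball, not_lt, dist_comm, dist_eq_norm] at hs
    have hz' : 0 < √z := Real.sqrt_pos.mpr hz
    calc √z - R + R = z * (1 / √z) := by
          rw [mul_one_div, Real.div_sqrt]; ring
      _ ≤ _ := by gcongr

lemma tendsto_OmegaD {n : ℕ} (hn : 2 ≤ n) {D : Set (EuclideanSpace ℝ (Fin n))}
    (hD : Bornology.IsBounded D) : Tendsto (fun z => OmegaD D z) atTop (nhds 0) := by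
  obtain ⟨R, hR⟩ := hD.exists_norm_le
  have hsqrt : Tendsto (fun z : ℝ => √z) atTop atTop := Real.tendsto_sqrt_atTop
  have h1 : Tendsto (fun z : ℝ => ENNReal.ofReal (Real.exp (-((√z - R) ^ 2) / 2)))
      atTop (nhds 0) := by
    rw [← ENNReal.ofReal_zero]
    refine ENNReal.tendsto_ofReal (Real.tendsto_exp_atBot.comp ?_)
    have h2 : Tendsto (fun z : ℝ => (√z - R) ^ 2) atTop atTop :=
      (tendsto_pow_atTop two_ne_zero).comp (tendsto_atTop_add_const_right _ (-R) hsqrt)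
    exact (tendsto_neg_atTop_atBot.comp h2).atBot_div_const two_pos
  have h2 : Tendsto (fun z : ℝ => volume (Metric.ball (0 : EuclideanSpace ℝ (Fin n)) (1 / √z)))
      atTop (nhds 0) := by
    have e : ∀ z : ℝ, volume (Metric.ball (0 : EuclideanSpace ℝ (Fin n)) (1 / √z)) =
        ENNReal.ofReal ((1 / √z) ^ n) *
          volume (Metric.ball (0 : EuclideanSpace ℝ (Fin n)) 1) := by
      intro z
      have : Nontrivial (EuclideanSpace ℝ (Fin n)) :=
        Module.nontrivial_of_finrank_pos (R := ℝ) (by simp; omega)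
      rw [Measure.addHaar_ball _ _ (by positivity), finrank_euclideanSpace_fin]
    simp only [e]
    have h3 : Tendsto (fun z : ℝ => (1 / √z) ^ n) atTop (nhds 0) := by
      have := (tendsto_const_nhds (x := (1 : ℝ)).div_atTop hsqrt).pow n
      rwa [zero_pow (by omega)] at this
    have h4 := ENNReal.Tendsto.mul_const (ENNReal.tendsto_ofReal h3)
      (b := volume (Metric.ball (0 : EuclideanSpace ℝ (Fin n)) 1))
      (Or.inr measure_ball_lt_top.ne)
    simpa using h4
  have h3 := (ENNReal.Tendsto.const_mul (ENNReal.Tendsto.mul_const h1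
      (b := ENNReal.ofReal √(π / (1 / 2))) (Or.inr ENNReal.ofReal_ne_top))
      (a := ∫⁻ ξ : EuclideanSpace ℝ (Fin n), ENNReal.ofReal (Real.exp (-‖ξ‖ ^ 2)))
      (Or.inr (lintegral_gaussian_lt_top n).ne)).add
    (ENNReal.Tendsto.const_mul h2 (a := ENNReal.ofReal √(π / 1)) (Or.inr ENNReal.ofReal_ne_top))
  rw [zero_mul, mul_zero, mul_zero, add_zero] at h3
  refine tendsto_of_tendsto_of_tendsto_of_le_of_le' tendsto_const_nhds h3
    (Eventually.of_forall fun _ => zero_le) ?_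
  filter_upwards [eventually_gt_atTop 0, hsqrt.eventually_ge_atTop R] with z hz hzR
  exact OmegaD_le hR hz hzR

/-- The Maxwellian `λ(x,ξ,t) = e^{−|x−tξ|²−|ξ|²}` is a scattering frame:
(i) the weighted collision integrals along characteristics are bounded by `2·V_{n−1}·Ω < ∞`;
(ii) on every bounded spatial set `D` the weighted tails are bounded by `2·V_{n−1}·Ω_D(z)`
and tend to `0` as `z → ∞`; hence the isotropic radius satisfies `α ≥ 1/(4·V_{n−1}·Ω)`. -/
theorem maxwellian_is_scattering_frame {n : ℕ} (hn : 2 ≤ n)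
    (lam0 : EuclideanSpace ℝ (Fin n) → EuclideanSpace ℝ (Fin n) → ℝ)
    (hlam0 : ∀ x ξ, lam0 x ξ = Real.exp (-‖x‖ ^ 2 - ‖ξ‖ ^ 2))
    (lam : EuclideanSpace ℝ (Fin n) → EuclideanSpace ℝ (Fin n) → ℝ → ℝ)
    (hlam : ∀ x ξ t, lam x ξ t = lam0 (x - t • ξ) ξ) :
    -- (i) the full weighted collision integrals are bounded by `2·V_{n−1}·Ω`, with `Ω < ∞`
    ((⨆ (x : EuclideanSpace ℝ (Fin n)) (ξ : EuclideanSpace ℝ (Fin n)),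
        (∫⁻ t in Ioi (0:ℝ), ENNReal.ofReal (Qp lam lam (x + t • ξ) ξ t))
          / ENNReal.ofReal (lam0 x ξ))
      + (⨆ (x : EuclideanSpace ℝ (Fin n)) (ξ : EuclideanSpace ℝ (Fin n)),
        (∫⁻ t in Ioi (0:ℝ), ENNReal.ofReal (Qm lam lam (x + t • ξ) ξ t))
          / ENNReal.ofReal (lam0 x ξ))
      ≤ 2 * ENNReal.ofReal (sphereVol n) * Omega n)
    ∧ Omega n < ⊤
    -- (ii) the weighted tails over a bounded set `D` are bounded by `2·V_{n−1}·Ω_D(z) → 0`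
    ∧ (∀ D : Set (EuclideanSpace ℝ (Fin n)), Bornology.IsBounded D →
        (∀ z : ℝ,
          (⨆ x ∈ D, ⨆ ξ : EuclideanSpace ℝ (Fin n),
              (∫⁻ t in Ioi z, ENNReal.ofReal (Qp lam lam (x + t • ξ) ξ t))
                / ENNReal.ofReal (lam0 x ξ))
            + (⨆ x ∈ D, ⨆ ξ : EuclideanSpace ℝ (Fin n),
              (∫⁻ t in Ioi z, ENNReal.ofReal (Qm lam lam (x + t • ξ) ξ t))
                / ENNReal.ofReal (lam0 x ξ))
          ≤ 2 * ENNReal.ofReal (sphereVol n) * OmegaD D z)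
        ∧ Tendsto (fun z : ℝ =>
            (⨆ x ∈ D, ⨆ ξ : EuclideanSpace ℝ (Fin n),
              (∫⁻ t in Ioi z, ENNReal.ofReal (Qp lam lam (x + t • ξ) ξ t))
                / ENNReal.ofReal (lam0 x ξ))
            + (⨆ x ∈ D, ⨆ ξ : EuclideanSpace ℝ (Fin n),
              (∫⁻ t in Ioi z, ENNReal.ofReal (Qm lam lam (x + t • ξ) ξ t))
                / ENNReal.ofReal (lam0 x ξ)))
            atTop (nhds 0))
    -- hence the isotropic radius `α` of the Maxwellian frame satisfies `α ≥ 1/(4·V_{n−1}·Ω)`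
    ∧ (∀ α : ℝ, 0 < α →
        ((⨆ (x : EuclideanSpace ℝ (Fin n)) (ξ : EuclideanSpace ℝ (Fin n)),
            (∫⁻ t in Ioi (0:ℝ), ENNReal.ofReal (Qp lam lam (x + t • ξ) ξ t))
              / ENNReal.ofReal (lam0 x ξ))
          + (⨆ (x : EuclideanSpace ℝ (Fin n)) (ξ : EuclideanSpace ℝ (Fin n)),
            (∫⁻ t in Ioi (0:ℝ), ENNReal.ofReal (Qm lam lam (x + t • ξ) ξ t))
              / ENNReal.ofReal (lam0 x ξ))
          = ENNReal.ofReal (1 / (2 * α))) →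
        1 / (4 * sphereVol n * (Omega n).toReal) ≤ α) := by
  have h := lam_formula hlam0 hlam
  simp only [Qp_eq_Qm h, hlam0, ← two_mul, mul_assoc]
  have hI : (2 : ℝ≥0∞) * (⨆ (x : EuclideanSpace ℝ (Fin n)) (ξ : EuclideanSpace ℝ (Fin n)),
        (∫⁻ t in Ioi (0:ℝ), ENNReal.ofReal (Qm lam lam (x + t • ξ) ξ t))
          / ENNReal.ofReal (Real.exp (-‖x‖ ^ 2 - ‖ξ‖ ^ 2)))
      ≤ 2 * (ENNReal.ofReal (sphereVol n) * Omega n) := by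
    gcongr
    refine iSup₂_le fun x ξ => (weighted_tail_le h x ξ 0).trans ?_
    gcongr
    exact le_iSup₂_of_le x ξ le_rfl
  have hII : ∀ (D : Set (EuclideanSpace ℝ (Fin n))) (z : ℝ),
      (2 : ℝ≥0∞) * (⨆ x ∈ D, ⨆ ξ : EuclideanSpace ℝ (Fin n),
        (∫⁻ t in Ioi z, ENNReal.ofReal (Qm lam lam (x + t • ξ) ξ t))
          / ENNReal.ofReal (Real.exp (-‖x‖ ^ 2 - ‖ξ‖ ^ 2)))
      ≤ 2 * (ENNReal.ofReal (sphereVol n) * OmegaD D z) := by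
    intro D z
    gcongr
    refine iSup₂_le fun x hx => iSup_le fun ξ => (weighted_tail_le h x ξ z).trans ?_
    gcongr
    exact le_iSup₂_of_le x hx (le_iSup_of_le ξ le_rfl)
  refine ⟨hI, Omega_lt_top n, fun D hD => ⟨hII D, ?_⟩, fun α hα hEq => ?_⟩
  · have h0 := ENNReal.Tendsto.const_mul (a := 2) (ENNReal.Tendsto.const_mul (tendsto_OmegaD hn hD)
      (a := ENNReal.ofReal (sphereVol n)) (Or.inr ENNReal.ofReal_ne_top))
      (Or.inr (by simp))
    rw [mul_zero, mul_zero] at h0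
    exact tendsto_of_tendsto_of_tendsto_of_le_of_le tendsto_const_nhds h0
      (fun _ => zero_le) (hII D)
  · have hV : 0 ≤ sphereVol n := ENNReal.toReal_nonneg
    have hO : 0 ≤ (Omega n).toReal := ENNReal.toReal_nonneg
    rw [hEq, ← ENNReal.ofReal_toReal (Omega_lt_top n).ne,
      ← ENNReal.ofReal_mul hV, ← ENNReal.ofReal_ofNat 2,
      ← ENNReal.ofReal_mul (by norm_num),
      ENNReal.ofReal_le_ofReal_iff (by positivity)] at hI
    set W := sphereVol n * (Omega n).toReal
    rw [div_le_iff₀ (by positivity)] at hI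
    -- `1 ≤ 4 α W` forces `W > 0`, so the division below is a genuine one.
    have hW : 0 < W := by
      by_contra hcon
      nlinarith [mul_nonneg hα.le (not_lt.mp hcon |> neg_nonneg.mpr)]
    rw [div_le_iff₀ (by positivity)]
    linarith
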